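/- arXiv:1909.04602 — 2 statements merged into one kernel-verified Lean document; each statement's English description precedes it below -/
import Mathlib

section
/- The following are equivalent: (i) sNFLVR holds; (ii) ρ_{𝒞̃}(ξ) > 0 for every bounded measurable ξ : Ω → ℝ with ξ ≥ 0 q.s. and ξ not q.s. equal to 0; (iii) ρ_{𝒞̃}(1_A) > 0 for every A ∈ ℱ that is not 𝒫-polar. -/
open MeasureTheory Filter Topology

namespace Paper

variable {Ω : Type*} [MeasurableSpace Ω]

/-- `N` is a `Ps`-polar set: it is contained in a measurable set which is null
for every measure in `Ps`. -/
def Polar (Ps : Set (Measure Ω)) (N : Set Ω) : Prop :=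
  ∃ N' : Set Ω, MeasurableSet N' ∧ N ⊆ N' ∧ ∀ P ∈ Ps, P N' = 0

/-- `X ≤ Y` holds `Ps`-quasi surely. -/
def LeQS (Ps : Set (Measure Ω)) (X Y : Ω → ℝ) : Prop :=
  Polar Ps {ω | ¬ X ω ≤ Y ω}

/-- `X = Y` holds `Ps`-quasi surely. -/
def EqQS (Ps : Set (Measure Ω)) (X Y : Ω → ℝ) : Prop :=
  Polar Ps {ω | X ω ≠ Y ω}

/-- The set of quasi-sure bounds of `X` relative to the weight `W`:
all `m ≥ 0` such that `|X| ≤ m • W` quasi surely. -/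
def Bounds (Ps : Set (Measure Ω)) (W X : Ω → ℝ) : Set ℝ :=
  {m | 0 ≤ m ∧ Polar Ps {ω | m * W ω < |X ω|}}

/-- Membership in the space `L^W`. -/
def MemLW (Ps : Set (Measure Ω)) (W X : Ω → ℝ) : Prop :=
  Measurable X ∧ (Bounds Ps W X).Nonempty

/-- The norm `‖X‖_W` (for `W = 1` this is the quasi-sure sup-norm `‖·‖_{Ps,∞}`). -/
noncomputable def normW (Ps : Set (Measure Ω)) (W X : Ω → ℝ) : ℝ :=
  sInf (Bounds Ps W X)

/-- `Kc` is a convex cone of measurable functions containing `0`. -/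
def IsConvexCone (Kc : Set (Ω → ℝ)) : Prop :=
  (∀ k ∈ Kc, Measurable k) ∧ (fun _ => (0 : ℝ)) ∈ Kc ∧
  (∀ k ∈ Kc, ∀ c : ℝ, 0 ≤ c → (fun ω => c * k ω) ∈ Kc) ∧
  (∀ k₁ ∈ Kc, ∀ k₂ ∈ Kc, (fun ω => k₁ ω + k₂ ω) ∈ Kc)

/-- `Kc_λ`: the elements of `Kc` bounded below by `-λ • W` quasi surely. -/
def Klam (Ps : Set (Measure Ω)) (W : Ω → ℝ) (Kc : Set (Ω → ℝ)) (l : ℝ) : Set (Ω → ℝ) :=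
  {k ∈ Kc | LeQS Ps (fun ω => -l * W ω) k}

/-- The cone `𝒞` of claims super-replicable at zero cost. -/
def coneC (Ps : Set (Measure Ω)) (W : Ω → ℝ) (Kc : Set (Ω → ℝ)) : Set (Ω → ℝ) :=
  {X | MemLW Ps W X ∧ ∃ k ∈ Kc, LeQS Ps X k}

/-- The set `𝒞_λ`. -/
def coneCLam (Ps : Set (Measure Ω)) (W : Ω → ℝ) (Kc : Set (Ω → ℝ)) (l : ℝ) : Set (Ω → ℝ) :=
  {X | MemLW Ps W X ∧ ∃ k ∈ Klam Ps W Kc l, LeQS Ps X k}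

/-- The sensitive cone `𝒞̃`. -/
def coneCTilde (Ps : Set (Measure Ω)) (W : Ω → ℝ) (Kc : Set (Ω → ℝ)) : Set (Ω → ℝ) :=
  {X | MemLW Ps W X ∧ ∀ P ∈ Ps, ∃ k ∈ Kc, ∀ᵐ ω ∂P, X ω ≤ k ω}

/-- The sensitive set `𝒞̃_λ`. -/
def coneCTildeLam (Ps : Set (Measure Ω)) (W : Ω → ℝ) (Kc : Set (Ω → ℝ)) (l : ℝ) :
    Set (Ω → ℝ) :=
  {X | MemLW Ps W X ∧ ∀ P ∈ Ps, ∃ k ∈ Klam Ps W Kc l, ∀ᵐ ω ∂P, X ω ≤ k ω}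

/-- `𝒞̂ = ⋃_{λ ≥ 0} 𝒞̃_λ`. -/
def coneCHat (Ps : Set (Measure Ω)) (W : Ω → ℝ) (Kc : Set (Ω → ℝ)) : Set (Ω → ℝ) :=
  ⋃ l ∈ {r : ℝ | 0 ≤ r}, coneCTildeLam Ps W Kc l

/-- A set `A ⊆ L^W` is Fatou closed: it is stable under quasi-sure limits of
`‖·‖_W`-bounded sequences. -/
def FatouClosed (Ps : Set (Measure Ω)) (W : Ω → ℝ) (A : Set (Ω → ℝ)) : Prop :=
  ∀ X : ℕ → Ω → ℝ, (∀ n, X n ∈ A) → (∃ m : ℝ, ∀ n, m ∈ Bounds Ps W (X n)) →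
    ∀ Y : Ω → ℝ, MemLW Ps W Y →
      Polar Ps {ω | ¬ Tendsto (fun n => X n ω) atTop (nhds (Y ω))} → Y ∈ A

/-- Bounded measurable real-valued function. -/
def BddMeas (X : Ω → ℝ) : Prop := Measurable X ∧ ∃ c : ℝ, ∀ ω, |X ω| ≤ c

/-- sensitive No Free Lunch with Vanishing Risk: any quasi-surely nonnegative
bounded measurable `ξ` which is a `‖·‖_{Ps,∞}`-limit of elements of `𝒞̃ ∩ L^∞`
vanishes quasi surely. -/
def sNFLVR (Ps : Set (Measure Ω)) (W : Ω → ℝ) (Kc : Set (Ω → ℝ)) : Prop :=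
  ∀ ξ : Ω → ℝ, BddMeas ξ → LeQS Ps (fun _ => 0) ξ →
    (∃ X : ℕ → Ω → ℝ,
      (∀ n, X n ∈ coneCTilde Ps W Kc ∧ MemLW Ps (fun _ => 1) (X n)) ∧
      Tendsto (fun n => normW Ps (fun _ => 1) (fun ω => X n ω - ξ ω)) atTop (nhds 0)) →
    EqQS Ps ξ (fun _ => 0)

/-- No Arbitrage for the cone `Kc`. -/
def NA (Ps : Set (Measure Ω)) (Kc : Set (Ω → ℝ)) : Prop :=
  ∀ k ∈ Kc, LeQS Ps (fun _ => 0) k → EqQS Ps k (fun _ => 0)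

/-- `Ps_W`: probability measures dominated by some member of `Ps` and integrating `W`. -/
def PW (Ps : Set (Measure Ω)) (W : Ω → ℝ) : Set (Measure Ω) :=
  {Q | IsProbabilityMeasure Q ∧ (∃ P ∈ Ps, Q ≪ P) ∧ Integrable W Q}

/-- An approximate separating class `(Q_n)_{n ≥ 1}`. -/
def ApproxSep (Ps : Set (Measure Ω)) (W : Ω → ℝ) (Kc : Set (Ω → ℝ))
    (Q : ℕ → Measure Ω) : Prop :=
  (∀ n : ℕ, 1 ≤ n → Q n ∈ PW Ps W) ∧
  (∃ Pbar ∈ Ps, ∀ n : ℕ, 1 ≤ n → Q n ≪ Pbar) ∧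
  (∀ n : ℕ, 1 ≤ n → ∀ X ∈ coneCLam Ps W Kc (n : ℝ), ∫ ω, X ω ∂(Q n) ≤ 1 / (n : ℝ))

/-- `Q_app ≈ Ps` : the approximate separating classes and `Ps` share the same
polar sets. -/
def QappEquivP (Ps : Set (Measure Ω)) (W : Ω → ℝ) (Kc : Set (Ω → ℝ)) : Prop :=
  ∀ A : Set Ω, MeasurableSet A →
    ((∀ Q : ℕ → Measure Ω, ApproxSep Ps W Kc Q → ∀ n : ℕ, 1 ≤ n → Q n A = 0) ↔ Polar Ps A)

/-- The superhedging-type functional `ρ_A`, with values in `EReal` and the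
convention `inf ∅ = +∞`. -/
noncomputable def rho (A : Set (Ω → ℝ)) (X : Ω → ℝ) : EReal :=
  sInf {y : EReal | ∃ x : ℝ, y = (x : EReal) ∧ (fun ω => X ω - x) ∈ A}

end Paper

namespace Paper

lemma polar_mono {Ω : Type*} [MeasurableSpace Ω] {Ps : Set (Measure Ω)} {A B : Set Ω}
    (h : A ⊆ B) (hB : Polar Ps B) : Polar Ps A := by
  obtain ⟨N, h1, h2, h3⟩ := hB
  exact ⟨N, h1, h.trans h2, h3⟩

lemma polar_union {Ω : Type*} [MeasurableSpace Ω] {Ps : Set (Measure Ω)} {A B : Set Ω}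
    (hA : Polar Ps A) (hB : Polar Ps B) : Polar Ps (A ∪ B) := by
  obtain ⟨N, h1, h2, h3⟩ := hA
  obtain ⟨M, g1, g2, g3⟩ := hB
  exact ⟨N ∪ M, h1.union g1, Set.union_subset_union h2 g2,
    fun P hP => measure_union_null (h3 P hP) (g3 P hP)⟩

lemma polar_iUnion {Ω : Type*} [MeasurableSpace Ω] {Ps : Set (Measure Ω)} {A : ℕ → Set Ω}
    (hA : ∀ n, Polar Ps (A n)) : Polar Ps (⋃ n, A n) := by
  choose N h1 h2 h3 using hA
  exact ⟨⋃ n, N n, MeasurableSet.iUnion h1, Set.iUnion_mono h2,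
    fun P hP => measure_iUnion_null (fun n => h3 n P hP)⟩

lemma polar_empty {Ω : Type*} [MeasurableSpace Ω] {Ps : Set (Measure Ω)} :
    Polar Ps (∅ : Set Ω) := ⟨∅, MeasurableSet.empty, subset_rfl, fun P _ => measure_empty⟩

lemma memLW_of_bdd {Ω : Type*} [MeasurableSpace Ω] {Ps : Set (Measure Ω)}
    {W : Ω → ℝ} (hW1 : ∀ ω, 1 ≤ W ω) {Y : Ω → ℝ} (hY : BddMeas Y) : MemLW Ps W Y := by
  obtain ⟨hm, c, hc⟩ := hY
  refine ⟨hm, |c|, abs_nonneg c, polar_mono ?_ polar_empty⟩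
  intro ω hω
  have h1 := hc ω
  have h2 := hW1 ω
  have h3 := le_abs_self c
  have h4 := abs_nonneg c
  simp only [Set.mem_setOf_eq] at hω
  exfalso
  nlinarith

lemma mem_tilde {Ω : Type*} [MeasurableSpace Ω] {Ps : Set (Measure Ω)}
    {W : Ω → ℝ} (hW1 : ∀ ω, 1 ≤ W ω) {Kc : Set (Ω → ℝ)} (hKc : IsConvexCone Kc)
    {X Y : Ω → ℝ} (hX : X ∈ coneCTilde Ps W Kc) (hY : BddMeas Y) {c : ℝ} (hc : 0 ≤ c)
    (h : LeQS Ps Y (fun ω => c * X ω)) : Y ∈ coneCTilde Ps W Kc := by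
  refine ⟨memLW_of_bdd hW1 hY, fun P hP => ?_⟩
  obtain ⟨k, hk, hXk⟩ := hX.2 P hP
  refine ⟨_, hKc.2.2.1 k hk c hc, ?_⟩
  obtain ⟨N, h1, h2, h3⟩ := h
  have h4 : ∀ᵐ ω ∂P, Y ω ≤ c * X ω := measure_mono_null h2 (h3 P hP)
  filter_upwards [hXk, h4] with ω h5 h6
  exact h6.trans (mul_le_mul_of_nonneg_left h5 hc)

lemma bdd_sub {Ω : Type*} [MeasurableSpace Ω] {Y : Ω → ℝ} (hY : BddMeas Y) (x : ℝ) :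
    BddMeas (fun ω => Y ω - x) := by
  obtain ⟨hm, c, hc⟩ := hY
  exact ⟨hm.sub_const x, c + |x|, fun ω => (abs_sub _ _).trans (by linarith [hc ω])⟩

lemma leQS_of_le {Ω : Type*} [MeasurableSpace Ω] {Ps : Set (Measure Ω)} {X Y : Ω → ℝ}
    (h : ∀ ω, X ω ≤ Y ω) : LeQS Ps X Y :=
  polar_mono (fun ω hω => absurd (h ω) hω) polar_empty

lemma rho_pos_iff {Ω : Type*} [MeasurableSpace Ω] {Ps : Set (Measure Ω)}
    {W : Ω → ℝ} (hW1 : ∀ ω, 1 ≤ W ω) {Kc : Set (Ω → ℝ)} (hKc : IsConvexCone Kc)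
    {ξ : Ω → ℝ} (hξ : BddMeas ξ) :
    (0 : EReal) < rho (coneCTilde Ps W Kc) ξ ↔
      ∃ ε : ℝ, 0 < ε ∧ (fun ω => ξ ω - ε) ∉ coneCTilde Ps W Kc := by
  constructor
  · intro h
    obtain ⟨c, h1, h2⟩ := EReal.lt_iff_exists_real_btwn.1 h
    refine ⟨c, by exact_mod_cast h1, fun hm => ?_⟩
    have hle : rho (coneCTilde Ps W Kc) ξ ≤ (c : EReal) := sInf_le ⟨c, rfl, hm⟩
    exact absurd hle (not_le.2 h2)
  · rintro ⟨ε, h0, hn⟩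
    refine lt_of_lt_of_le (b := (ε : EReal)) (by exact_mod_cast h0) (le_sInf ?_)
    rintro _ ⟨x, rfl, hx⟩
    by_contra hlt
    have hlt : x < ε := by exact_mod_cast not_le.1 hlt
    refine hn (mem_tilde hW1 hKc hx (bdd_sub hξ ε) zero_le_one (leQS_of_le fun ω => ?_))
    linarith

lemma bdd_ind {Ω : Type*} [MeasurableSpace Ω] {A : Set Ω} (hA : MeasurableSet A) :
    BddMeas (A.indicator fun _ => (1 : ℝ)) := by
  refine ⟨measurable_const.indicator hA, 1, fun ω => ?_⟩
  by_cases h : ω ∈ A <;> simp [h]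


/-- **Lemma (`strict:positive`).** sNFLVR is equivalent to strict positivity of
`ρ_{𝒞̃}` on nonzero nonnegative bounded claims, and to strict positivity of
`ρ_{𝒞̃}` on indicators of non-polar events. -/
theorem sNFLVR_iff_rho_pos {Ω : Type*} [MeasurableSpace Ω]
    (Ps : Set (Measure Ω)) (hPsne : Ps.Nonempty)
    (hPsprob : ∀ P ∈ Ps, IsProbabilityMeasure P)
    (W : Ω → ℝ) (hWmeas : Measurable W) (hW1 : ∀ ω, 1 ≤ W ω)
    (Kc : Set (Ω → ℝ)) (hKc : IsConvexCone Kc) :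
    (sNFLVR Ps W Kc ↔
      ∀ ξ : Ω → ℝ, BddMeas ξ → LeQS Ps (fun _ => 0) ξ → ¬ EqQS Ps ξ (fun _ => 0) →
        (0 : EReal) < rho (coneCTilde Ps W Kc) ξ) ∧
    ((∀ ξ : Ω → ℝ, BddMeas ξ → LeQS Ps (fun _ => 0) ξ → ¬ EqQS Ps ξ (fun _ => 0) →
        (0 : EReal) < rho (coneCTilde Ps W Kc) ξ) ↔
      ∀ A : Set Ω, MeasurableSet A → ¬ Polar Ps A →
        (0 : EReal) < rho (coneCTilde Ps W Kc) (A.indicator fun _ => (1 : ℝ))) := by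
  refine ⟨⟨fun h ξ hb h0 hne => ?_, fun h ξ hb h0 ⟨X, hX, hlim⟩ => ?_⟩,
    ⟨fun h A hA hnp => ?_, fun h ξ hb h0 hne => ?_⟩⟩
  · rw [rho_pos_iff hW1 hKc hb]
    by_contra! hcon
    refine hne (h ξ hb h0 ⟨fun n ω => ξ ω - 1 / ((n : ℝ) + 1), fun n =>
      ⟨hcon _ (by positivity), memLW_of_bdd (fun _ => le_rfl) (bdd_sub hb _)⟩, ?_⟩)
    refine squeeze_zero (fun n => Real.sInf_nonneg fun m hm => hm.1) (fun n => ?_)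
      tendsto_one_div_add_atTop_nhds_zero_nat
    refine csInf_le ⟨0, fun m hm => hm.1⟩ ⟨by positivity, polar_mono ?_ polar_empty⟩
    intro ω hω
    have hp : (0 : ℝ) ≤ 1 / ((n : ℝ) + 1) := by positivity
    have e : ξ ω - 1 / ((n : ℝ) + 1) - ξ ω = -(1 / ((n : ℝ) + 1)) := by ring
    simp only [Set.mem_setOf_eq] at hω
    rw [e, abs_neg, abs_of_nonneg hp] at hω
    linarith
  · by_contra hne
    obtain ⟨ε, hε, hn⟩ := (rho_pos_iff hW1 hKc hb).1 (h ξ hb h0 hne)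
    obtain ⟨n, hlt⟩ := (hlim.eventually (gt_mem_nhds hε)).exists
    have hbn : (Bounds Ps (fun _ => 1) (fun ω => X n ω - ξ ω)).Nonempty := by
      obtain ⟨-, m, hm, hp⟩ := (hX n).2
      obtain ⟨-, c, hc⟩ := hb
      refine ⟨m + |c|, by positivity, polar_mono ?_ hp⟩
      intro ω hω
      simp only [Set.mem_setOf_eq] at hω ⊢
      have := abs_sub (X n ω) (ξ ω)
      have := hc ω
      have := le_abs_self c
      linarith
    obtain ⟨m, ⟨hm0, hm⟩, hmε⟩ := exists_lt_of_csInf_lt hbn hlt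
    refine hn (mem_tilde hW1 hKc (hX n).1 (bdd_sub hb ε) zero_le_one (polar_mono ?_ hm))
    intro ω hω
    simp only [Set.mem_setOf_eq, not_le] at hω ⊢
    have := neg_le_abs (X n ω - ξ ω)
    linarith
  · refine h _ (bdd_ind hA) (leQS_of_le fun ω => Set.indicator_nonneg (fun _ _ => zero_le_one) ω)
      fun he => hnp (polar_mono ?_ he)
    intro ω hω
    simp [hω]
  · have hex : ∃ n : ℕ, ¬ Polar Ps {ω | 1 / ((n : ℝ) + 1) < ξ ω} := by
      by_contra! hcon
      refine hne (polar_mono ?_ (polar_union h0 (polar_iUnion hcon)))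
      intro ω hω
      by_cases hp : 0 ≤ ξ ω
      · right
        obtain ⟨n, hn⟩ := exists_nat_one_div_lt (lt_of_le_of_ne hp (Ne.symm hω))
        exact Set.mem_iUnion.2 ⟨n, hn⟩
      · exact Or.inl hp
    obtain ⟨n, hn⟩ := hex
    have hA : MeasurableSet {ω | 1 / ((n : ℝ) + 1) < ξ ω} := measurableSet_lt measurable_const hb.1
    obtain ⟨ε, hε, hnot⟩ := (rho_pos_iff hW1 hKc (bdd_ind hA)).1 (h _ hA hn)
    have hN : (0 : ℝ) < (n : ℝ) + 1 := by positivity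
    rw [rho_pos_iff hW1 hKc hb]
    refine ⟨ε / ((n : ℝ) + 1), by positivity, fun hm => hnot ?_⟩
    refine mem_tilde hW1 hKc hm (bdd_sub (bdd_ind hA) ε) hN.le (polar_mono ?_ h0)
    intro ω hω hp
    apply hω
    have e : ((n : ℝ) + 1) * (ξ ω - ε / ((n : ℝ) + 1)) = ((n : ℝ) + 1) * ξ ω - ε := by
      field_simp
    simp only [e]
    by_cases hc : 1 / ((n : ℝ) + 1) < ξ ω
    · have := (div_lt_iff₀ hN).1 hc
      simp only [Set.indicator, Set.mem_setOf_eq, hc, if_true]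
      linarith
    · simp only [Set.indicator, Set.mem_setOf_eq, hc, if_false]
      have : 0 ≤ ((n : ℝ) + 1) * ξ ω := mul_nonneg hN.le hp
      linarith

end Paper
end

section
/- Assume 𝒞 is Fatou closed. Then sNABR holds if and only if for every A ∈ ℱ that is not 𝒫-polar and every n ≥ 1 there exist δ_n with 0 < δ_n ≤ 1/n and Q_n ∈ 𝒫_W such that Q_n(A) > n·δ_n and ∫ X dQ_n < δ_n for every X ∈ 𝒞̃_n. -/
open MeasureTheory Filter Topology

namespace Paper

section aux
variable {H : Type*} [NormedAddCommGroup H] [InnerProductSpace ℝ H] [CompleteSpace H]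

theorem aux_nested (F : ℕ → Set H) (hanti : ∀ i j, i ≤ j → F j ⊆ F i)
    (hcl : ∀ j, IsClosed (F j)) (hcv : ∀ j, Convex ℝ (F j)) (hne : ∀ j, (F j).Nonempty)
    (R : ℝ) (hR : ∀ x ∈ F 0, ‖x‖ ≤ R) : ∃ x, ∀ j, x ∈ F j := by
  have h1 : ∀ j, ∃ v ∈ F j, ∀ y ∈ F j, ‖v‖ ≤ ‖y‖ := by
    intro j
    obtain ⟨v, hv, hv2⟩ := exists_norm_eq_iInf_of_complete_convex (hne j) (hcl j).isComplete
      (hcv j) 0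
    refine ⟨v, hv, fun y hy => ?_⟩
    have : ⨅ w : F j, ‖(0:H) - w‖ ≤ ‖(0:H) - (⟨y, hy⟩ : F j)‖ :=
      ciInf_le ⟨0, by rintro _ ⟨w, rfl⟩; positivity⟩ _
    rw [← hv2] at this
    simpa using this
  choose x hx hmin using h1
  have hmono : Monotone (fun j => ‖x j‖ ^ 2) := by
    intro i j hij
    have := hmin i (x j) (hanti i j hij (hx j))
    show ‖x i‖ ^ 2 ≤ ‖x j‖ ^ 2
    gcongr
  have hbdd : BddAbove (Set.range (fun j => ‖x j‖ ^ 2)) := by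
    refine ⟨R ^ 2, ?_⟩
    rintro _ ⟨j, rfl⟩
    have := hR (x j) (hanti 0 j (Nat.zero_le _) (hx j))
    show ‖x j‖ ^ 2 ≤ _
    gcongr
  have hlim := tendsto_atTop_ciSup hmono hbdd
  set a := ⨆ j, ‖x j‖ ^ 2 with ha
  have hle : ∀ j, ‖x j‖ ^ 2 ≤ a := fun j => le_ciSup hbdd j
  have hkey : ∀ i j, i ≤ j → ‖x i - x j‖ ≤ Real.sqrt (2 * (a - ‖x i‖ ^ 2)) := by
    intro i j hij
    apply Real.le_sqrt_of_sq_le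
    have hmid : (1/2 : ℝ) • x i + (1/2 : ℝ) • x j ∈ F i :=
      hcv i (hx i) (hanti i j hij (hx j)) (by norm_num) (by norm_num) (by norm_num)
    have h2 := hmin i _ hmid
    rw [← smul_add, norm_smul] at h2
    have h3 := parallelogram_law_with_norm ℝ (x i) (x j)
    have h4 := hle j
    norm_num at h2
    nlinarith [norm_nonneg (x i), norm_nonneg (x i + x j)]
  have hcau : CauchySeq x := by
    refine cauchySeq_of_le_tendsto_0' (fun i => Real.sqrt (2 * (a - ‖x i‖ ^ 2))) ?_ ?_
    · intro i j hij
      rw [dist_eq_norm]; exact hkey i j hij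
    · have : Tendsto (fun i => Real.sqrt (2 * (a - ‖x i‖ ^ 2))) atTop
          (𝓝 (Real.sqrt (2 * (a - a)))) :=
        (Real.continuous_sqrt.tendsto _).comp ((tendsto_const_nhds.sub hlim).const_mul 2)
      simpa using this
  obtain ⟨y, hy⟩ := cauchySeq_tendsto_of_complete hcau
  refine ⟨y, fun j => (hcl j).mem_of_tendsto hy ?_⟩
  filter_upwards [eventually_ge_atTop j] with k hk
  exact hanti j k hk (hx k)

theorem aux_posdist (S D : Set H) (hS : IsClosed S) (hSc : Convex ℝ S) (R : ℝ)
    (hR : ∀ x ∈ S, ‖x‖ ≤ R) (hD : IsClosed D) (hDc : Convex ℝ D) (hdisj : Disjoint S D) :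
    ∃ ε : ℝ, 0 < ε ∧ Disjoint (Metric.cthickening ε S) D := by
  by_contra hcon
  push Not at hcon
  obtain ⟨x, hx⟩ := aux_nested (fun j : ℕ => S ∩ Metric.cthickening (1 / ((j : ℝ) + 1)) D)
    (by
      intro i j hij
      refine Set.inter_subset_inter_right _ (Metric.cthickening_mono ?_ _)
      exact one_div_le_one_div_of_le (by positivity) (by gcongr))
    (fun j => hS.inter Metric.isClosed_cthickening)
    (fun j => hSc.inter (hDc.cthickening _))
    (by
      intro j
      have h1 := hcon (1 / ((j : ℝ) + 2)) (by positivity)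
      rw [Set.not_disjoint_iff] at h1
      obtain ⟨x, hx1, hx2⟩ := h1
      have hlt : 1 / ((j : ℝ) + 2) < 1 / ((j : ℝ) + 1) :=
        one_div_lt_one_div_of_lt (by positivity) (by linarith)
      have h3 := Metric.cthickening_subset_thickening' (by positivity) hlt S hx1
      rw [Metric.mem_thickening_iff] at h3
      obtain ⟨s, hs, hs2⟩ := h3
      refine ⟨s, hs, Metric.thickening_subset_cthickening _ _ ?_⟩
      rw [Metric.mem_thickening_iff]
      exact ⟨x, hx2, by rwa [dist_comm]⟩) R (fun x hx => hR x hx.1)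
  have hxD : x ∈ closure D := by
    rw [Metric.closure_eq_iInter_cthickening]
    simp only [Set.mem_iInter]
    intro δ hδ
    obtain ⟨j, hj⟩ := exists_nat_one_div_lt hδ
    exact Metric.cthickening_mono hj.le _ (hx j).2
  rw [hD.closure_eq] at hxD
  exact Set.disjoint_left.mp hdisj (hx 0).1 hxD

theorem aux_U (Bd : ℕ → Set H) (hBm : Monotone Bd) (hBcl : ∀ n, IsClosed (Bd n))
    (hBc : ∀ n, Convex ℝ (Bd n)) (R : ℕ → ℝ) (hR : ∀ n, ∀ x ∈ Bd n, ‖x‖ ≤ R n)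
    (D : Set H) (hD : Convex ℝ D) (hDcl : ∀ n, IsClosed (D ∩ Bd n))
    (y : H) (hy : y ∈ Bd 0) (hyD : y ∉ D) :
    ∃ U : Set H, Convex ℝ U ∧ Disjoint U D ∧ ∀ n, ∃ ε : ℝ, 0 < ε ∧
      ∀ z, ‖z - y‖ ≤ ε → z ∈ Bd n → z ∈ U := by
  have h1 : ∀ (n : ℕ) (S : Set H), ∃ ε : ℝ, 0 < ε ∧
      (IsClosed S ∧ Convex ℝ S ∧ S ⊆ Bd n ∧ Disjoint S D →
        Disjoint (Metric.cthickening ε S) (D ∩ Bd (n + 1))) := by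
    intro n S
    by_cases h : IsClosed S ∧ Convex ℝ S ∧ S ⊆ Bd n ∧ Disjoint S D
    · obtain ⟨ε, h1, h2⟩ := aux_posdist S (D ∩ Bd (n + 1)) h.1 h.2.1 (R n)
        (fun x hx => hR n x (h.2.2.1 hx)) (hDcl _) (hD.inter (hBc _))
        (h.2.2.2.mono_right Set.inter_subset_left)
      exact ⟨ε, h1, fun _ => h2⟩
    · exact ⟨1, one_pos, fun h' => absurd h' h⟩
  choose e he hed using h1
  obtain ⟨S, hS0, hS⟩ : ∃ S : ℕ → Set H, S 0 = {y} ∧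
      ∀ n, S (n + 1) = Bd (n + 1) ∩ Metric.cthickening (e n (S n)) (S n) :=
    ⟨fun n => Nat.rec {y} (fun n S => Bd (n + 1) ∩ Metric.cthickening (e n S) S) n,
      rfl, fun n => rfl⟩
  have hgood : ∀ n, IsClosed (S n) ∧ Convex ℝ (S n) ∧ S n ⊆ Bd n ∧ Disjoint (S n) D := by
    intro n
    induction n with
    | zero =>
      rw [hS0]
      refine ⟨isClosed_singleton, convex_singleton _, ?_, ?_⟩
      · rintro _ rfl; exact hy
      · exact Set.disjoint_singleton_left.mpr hyD
    | succ n ih =>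
      rw [hS]
      refine ⟨(hBcl _).inter Metric.isClosed_cthickening, (hBc _).inter (ih.2.1.cthickening _),
        Set.inter_subset_left, ?_⟩
      rw [Set.disjoint_left]
      intro x hx hxD
      exact Set.disjoint_left.mp (hed n _ ih) hx.2 ⟨hxD, hx.1⟩
  have hmono : Monotone S := by
    refine monotone_nat_of_le_succ fun n => ?_
    rw [hS]
    exact Set.subset_inter ((hgood n).2.2.1.trans (hBm (Nat.le_succ n)))
      (Metric.self_subset_cthickening _)
  have hyS : ∀ n, y ∈ S n := fun n => hmono (Nat.zero_le n) (by rw [hS0]; rfl)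
  refine ⟨⋃ n, S n, (hmono.directed_le).convex_iUnion (fun n => (hgood n).2.1), ?_, ?_⟩
  · rw [Set.disjoint_iUnion_left]
    exact fun n => (hgood n).2.2.2
  · intro n
    refine ⟨e n (S n), he _ _, fun z hz hzB => Set.mem_iUnion.mpr ⟨n + 1, ?_⟩⟩
    rw [hS]
    refine ⟨hBm (Nat.le_succ n) hzB, ?_⟩
    exact Metric.mem_cthickening_of_dist_le z y _ _ (hyS n) (by rwa [dist_eq_norm])

end aux

section sep
variable {Ω : Type*} [MeasurableSpace Ω]

/-- bounded measurable functions as a normed space -/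
def BM (Ω : Type*) [MeasurableSpace Ω] : Submodule ℝ (lp (fun _ : Ω => ℝ) ⊤) where
  carrier := {f | Measurable (f : Ω → ℝ)}
  add_mem' := by
    intro f g hf hg
    simp only [Set.mem_ofPred_eq, lp.coeFn_add] at *
    exact hf.add hg
  zero_mem' := by
    simp only [Set.mem_ofPred_eq, lp.coeFn_zero]
    exact measurable_const
  smul_mem' := by
    intro c f hf
    simp only [Set.mem_ofPred_eq, lp.coeFn_smul] at *
    exact hf.const_smul c

def BM.fn (f : BM Ω) : Ω → ℝ := (f : lp (fun _ : Ω => ℝ) ⊤)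

theorem BM.meas (f : BM Ω) : Measurable (BM.fn f) := f.2
theorem BM.le_norm (f : BM Ω) (ω : Ω) : |(BM.fn f) ω| ≤ ‖f‖ :=
  lp.norm_apply_le_norm (by simp) (f : lp (fun _ : Ω => ℝ) ⊤) ω
theorem BM.fn_add (f g : BM Ω) : BM.fn (f + g) = BM.fn f + BM.fn g := rfl
theorem BM.fn_sub (f g : BM Ω) : BM.fn (f - g) = BM.fn f - BM.fn g := rfl
theorem BM.fn_smul (c : ℝ) (g : BM Ω) : (BM.fn (c • g)) = c • (BM.fn g) := by
  simp [BM.fn]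
theorem BM.ext' {f g : BM Ω} (h : (BM.fn f) = (BM.fn g)) : f = g :=
  Subtype.ext (lp.ext h)

def BM.mk' (f : Ω → ℝ) (hf : BddMeas f) : BM Ω :=
  ⟨⟨f, memℓp_infty ⟨hf.2.choose, by rintro _ ⟨ω, rfl⟩; exact hf.2.choose_spec ω⟩⟩, hf.1⟩
theorem BM.fn_mk (f : Ω → ℝ) (hf : BddMeas f) : BM.fn (BM.mk' f hf) = f := rfl

theorem BM.memLp (P : Measure Ω) [IsProbabilityMeasure P] (f : BM Ω) : MemLp (BM.fn f) 2 P :=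
  MemLp.of_bound (BM.meas f).aestronglyMeasurable ‖f‖ (Eventually.of_forall fun ω => BM.le_norm f ω)

noncomputable def BM.T (P : Measure Ω) [IsProbabilityMeasure P] : BM Ω →ₗ[ℝ] Lp ℝ 2 P where
  toFun f := (BM.memLp P f).toLp
  map_add' f g := by
    rw [← MemLp.toLp_add]
    exact MemLp.toLp_congr _ _ (by rw [BM.fn_add])
  map_smul' c f := by
    rw [RingHom.id_apply, ← MemLp.toLp_const_smul]
    exact MemLp.toLp_congr _ _ (by rw [BM.fn_smul])

theorem BM.T_coe (P : Measure Ω) [IsProbabilityMeasure P] (f : BM Ω) : BM.T P f =ᵐ[P] (BM.fn f) :=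
  MemLp.coeFn_toLp (BM.memLp P f)

theorem BM.T_norm (P : Measure Ω) [IsProbabilityMeasure P] (f : BM Ω) :
    ‖BM.T P f‖ ^ 2 = ∫ ω, ((BM.fn f) ω) ^ 2 ∂P := by
  rw [← real_inner_self_eq_norm_sq, L2.inner_def]
  refine integral_congr_ae ?_
  filter_upwards [BM.T_coe P f] with ω hω
  rw [hω]
  simp [sq]

theorem aux_Lp_seq {P : Measure Ω} {x : ℕ → Lp ℝ 2 P} {y : Lp ℝ 2 P}
    (h : Tendsto x atTop (𝓝 y)) : ∃ ns : ℕ → ℕ, StrictMono ns ∧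
      ∀ᵐ ω ∂P, Tendsto (fun i => x (ns i) ω) atTop (𝓝 (y ω)) :=
  (tendstoInMeasure_of_tendsto_Lp h).exists_seq_tendsto_ae

theorem aux_sep (P : Measure Ω) [IsProbabilityMeasure P] (D : Set (Ω → ℝ))
    (hcv : ∀ f ∈ D, ∀ g ∈ D, ∀ a b : ℝ, 0 ≤ a → 0 ≤ b → a + b = 1 →
      (fun ω => a * f ω + b * g ω) ∈ D)
    (hsol : ∀ f ∈ D, ∀ g, Measurable g → g ≤ᵐ[P] f → g ∈ D)
    (hcl : ∀ (r : ℝ) (f : ℕ → Ω → ℝ) (g : Ω → ℝ), (∀ n, f n ∈ D) →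
      (∀ n, ∀ᵐ ω ∂P, |f n ω| ≤ r) → Measurable g →
      (∀ᵐ ω ∂P, Tendsto (fun n => f n ω) atTop (𝓝 (g ω))) → g ∈ D)
    (y : Ω → ℝ) (hy : BddMeas y) (hyD : y ∉ D) :
    ∃ G : (Ω → ℝ) → ℝ, (∀ f g, BddMeas f → BddMeas g → G (f + g) = G f + G g) ∧
      (∀ (c : ℝ) f, BddMeas f → G (c • f) = c * G f) ∧
      ∃ α κ : ℝ, 0 ≤ κ ∧ (∀ f ∈ D, BddMeas f → G f ≤ α) ∧ α < G y ∧
      ∀ n : ℕ, ∃ ε : ℝ, 0 < ε ∧ ∀ v, BddMeas v → (∀ ω, |v ω| ≤ n) → ∫ ω, (v ω) ^ 2 ∂P ≤ ε →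
        G v ≤ κ := by
  obtain ⟨c, hc⟩ := hy.2
  set D2 : Set (Lp ℝ 2 P) := {f | ∃ g ∈ D, f =ᵐ[P] g} with hD2
  set Bd : ℕ → Set (Lp ℝ 2 P) := fun n => {f | ∀ᵐ ω ∂P, |f ω| ≤ n + c} with hBd
  have hBcl : ∀ n, IsClosed (Bd n) := by
    intro n
    rw [← isSeqClosed_iff_isClosed]
    intro x z hx hz
    obtain ⟨ns, -, hns⟩ := aux_Lp_seq hz
    have hx' : ∀ᵐ ω ∂P, ∀ i, |x i ω| ≤ n + c := ae_all_iff.mpr hx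
    show ∀ᵐ ω ∂P, |z ω| ≤ n + c
    filter_upwards [hns, hx'] with ω h1 h2
    exact le_of_tendsto h1.abs (Eventually.of_forall fun i => h2 _)
  obtain ⟨U, hUc, hUD, hU⟩ := aux_U Bd
    (by
      intro i j hij f hf
      show ∀ᵐ ω ∂P, |f ω| ≤ j + c
      filter_upwards [hf] with ω hω
      have : (i : ℝ) ≤ j := by exact_mod_cast hij
      linarith)
    hBcl
    (by
      intro n f hf g hg a b ha hb hab
      show ∀ᵐ ω ∂P, _ ≤ _
      filter_upwards [hf, hg, Lp.coeFn_add (a • f) (b • g), Lp.coeFn_smul a f,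
        Lp.coeFn_smul b g] with ω h1 h2 h3 h4 h5
      rw [h3, Pi.add_apply, h4, h5]
      simp only [Pi.smul_apply, smul_eq_mul]
      rw [abs_le] at *
      obtain rfl : b = 1 - a := by linarith
      constructor <;> nlinarith)
    (fun n => n + c)
    (by
      intro n f hf
      have hnc : 0 ≤ (n : ℝ) + c := by
        obtain ⟨ω, hω⟩ := (show ∀ᵐ ω ∂P, |f ω| ≤ n + c from hf).exists
        exact (abs_nonneg _).trans hω
      have := Lp.norm_le_of_ae_bound (f := f) hnc hf
      simpa [measureUnivNNReal] using this)
    D2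
    (by
      rintro f ⟨f', hf', hff⟩ g ⟨g', hg', hgg⟩ a b ha hb hab
      refine ⟨_, hcv f' hf' g' hg' a b ha hb hab, ?_⟩
      filter_upwards [hff, hgg, Lp.coeFn_add (a • f) (b • g), Lp.coeFn_smul a f,
        Lp.coeFn_smul b g] with ω h1 h2 h3 h4 h5
      rw [h3, Pi.add_apply, h4, h5]
      simp [h1, h2])
    (by
      intro n
      rw [← isSeqClosed_iff_isClosed]
      intro x z hx hz
      refine ⟨?_, (hBcl n).mem_of_tendsto hz (Eventually.of_forall fun i => (hx i).2)⟩
      obtain ⟨ns, -, hns⟩ := aux_Lp_seq hz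
      choose g hg hxg using fun i => (hx i).1
      have hxg' : ∀ᵐ ω ∂P, ∀ i, x i ω = g i ω := ae_all_iff.mpr hxg
      have hzm := (Lp.aestronglyMeasurable z).aemeasurable
      refine ⟨hzm.mk z, hcl (n + c) (fun i => g (ns i)) _ (fun i => hg _) ?_ hzm.measurable_mk ?_,
        hzm.ae_eq_mk⟩
      · intro i
        filter_upwards [hxg', (hx (ns i)).2] with ω h1 h2
        rw [← h1]; exact h2
      · filter_upwards [hxg', hns, hzm.ae_eq_mk] with ω h1 h2 h3
        rw [← h3]
        simpa only [h1] using h2)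
    (BM.T P (BM.mk' y hy))
    (by
      show ∀ᵐ ω ∂P, _ ≤ _
      filter_upwards [BM.T_coe P (BM.mk' y hy)] with ω hω
      rw [hω, BM.fn_mk]
      simpa using hc ω)
    (by
      rintro ⟨g, hg, h⟩
      refine hyD (hsol g hg y hy.1 ?_)
      filter_upwards [h, BM.T_coe P (BM.mk' y hy)] with ω h1 h2
      rw [← h1, h2, BM.fn_mk])
  set Y := BM.mk' y hy with hY
  -- membership in the pulled back neighbourhood
  have hU' : ∀ n : ℕ, ∃ ε : ℝ, 0 < ε ∧ ∀ v : BM Ω, (∀ ω, |(BM.fn v) ω| ≤ n) →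
      ‖BM.T P v‖ ≤ ε → Y + v ∈ BM.T P ⁻¹' U := by
    intro n
    obtain ⟨ε, hε, h⟩ := hU n
    refine ⟨ε, hε, fun v hv hvn => h _ (by simpa [map_add] using hvn) ?_⟩
    show ∀ᵐ ω ∂P, _ ≤ _
    filter_upwards [BM.T_coe P (Y + v)] with ω hω
    rw [hω, BM.fn_add, Pi.add_apply]
    have h1 := hc ω
    have h2 := hv ω
    have h3 : (BM.fn Y) ω = y ω := rfl
    rw [h3]
    exact (abs_add_le _ _).trans (by linarith)
  have hint : Y ∈ interior (BM.T P ⁻¹' U) := by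
    obtain ⟨ε, hε, h⟩ := hU' 1
    rw [mem_interior_iff_mem_nhds, Metric.mem_nhds_iff]
    refine ⟨min ε 1, by positivity, fun z hz => ?_⟩
    rw [mem_ball_iff_norm] at hz
    have h1 : ‖z - Y‖ ≤ 1 := hz.le.trans (min_le_right _ _)
    have h2 := h (z - Y) (fun ω => by simpa using (BM.le_norm (z - Y) ω).trans h1) (by
      refine le_trans ?_ (hz.le.trans (min_le_left _ _))
      have := Lp.norm_le_of_ae_bound (f := BM.T P (z - Y)) (norm_nonneg (z - Y)) (by
        filter_upwards [BM.T_coe P (z - Y)] with ω hω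
        rw [hω]; exact BM.le_norm (z - Y) ω)
      simpa [measureUnivNNReal] using this)
    simpa using h2
  have hUc' : Convex ℝ (BM.T P ⁻¹' U) := hUc.linear_preimage _
  have hDc' : Convex ℝ {f : BM Ω | (BM.fn f) ∈ D} := by
    intro f hf g hg a b ha hb hab
    have := hcv _ hf _ hg a b ha hb hab
    show BM.fn _ ∈ D
    rw [BM.fn_add, BM.fn_smul, BM.fn_smul]
    exact this
  obtain ⟨f, u, hf1, hf2⟩ := geometric_hahn_banach_open hUc'.interior isOpen_interior hDc' (by
    rw [Set.disjoint_left]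
    intro x hx hxD
    exact Set.disjoint_left.mp hUD (interior_subset (s := BM.T P ⁻¹' U) hx) ⟨_, hxD, BM.T_coe P x⟩)
  have hf3 : ∀ x ∈ BM.T P ⁻¹' U, f x ≤ u := by
    intro x hx
    have h1 : x ∈ closure (interior (BM.T P ⁻¹' U)) := by
      rw [hUc'.closure_interior_eq_closure_of_nonempty_interior ⟨Y, hint⟩]
      exact subset_closure hx
    exact closure_minimal (fun z hz => (hf1 z hz).le)
      (isClosed_le f.continuous continuous_const) h1
  classical
  have hGd : ∀ v (hv : BddMeas v), (if h : BddMeas v then - f (BM.mk' v h) else 0) = 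
      - f (BM.mk' v hv) := fun v hv => dif_pos hv
  refine ⟨fun v => if h : BddMeas v then - f (BM.mk' v h) else 0, ?_, ?_, -u, u - f Y, ?_, ?_, ?_, ?_⟩
  · intro v w hv hw
    have hvw : BddMeas (v + w) := by
      obtain ⟨a, ha⟩ := hv.2
      obtain ⟨b, hb⟩ := hw.2
      exact ⟨hv.1.add hw.1, a + b, fun ω => (abs_add_le _ _).trans (add_le_add (ha ω) (hb ω))⟩
    simp only [hGd _ hv, hGd _ hw, hGd _ hvw]
    rw [show BM.mk' (v + w) hvw = BM.mk' v hv + BM.mk' w hw from BM.ext' (by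
      rw [BM.fn_add]; rfl), map_add]
    ring
  · intro c v hv
    have hvw : BddMeas (c • v) := by
      obtain ⟨a, ha⟩ := hv.2
      refine ⟨hv.1.const_smul c, |c| * a, fun ω => ?_⟩
      simp only [Pi.smul_apply, smul_eq_mul, abs_mul]
      exact mul_le_mul_of_nonneg_left (ha ω) (abs_nonneg _)
    simp only [hGd _ hv, hGd _ hvw]
    rw [show BM.mk' (c • v) hvw = c • BM.mk' v hv from BM.ext' (by
      rw [BM.fn_smul]; rfl), map_smul]
    simp
  · linarith [hf1 Y hint]
  · intro v hv hvb
    simp only [hGd _ hvb]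
    linarith [hf2 (BM.mk' v hvb) hv]
  · simp only [hGd _ hy]
    linarith [hf1 Y hint]
  · intro n
    obtain ⟨ε, hε, h⟩ := hU' n
    refine ⟨ε ^ 2, by positivity, fun v hv hvn hvi => ?_⟩
    simp only [hGd _ hv]
    have h1 : BM.mk' v hv = (-1 : ℝ) • ((-1 : ℝ) • BM.mk' v hv) := by simp
    have h2 := h ((-1 : ℝ) • BM.mk' v hv) (fun ω => by
      rw [BM.fn_smul, BM.fn_mk]; simpa using hvn ω) (by
      rw [map_smul, norm_smul]
      simp only [norm_neg, norm_one, one_mul]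
      refine le_of_sq_le_sq ?_ hε.le
      rw [BM.T_norm]
      exact hvi)
    have h3 := hf3 _ h2
    rw [map_add, map_smul] at h3
    simp at h3
    linarith
end sep

section meas
variable {Ω : Type*} [MeasurableSpace Ω]

theorem BddMeas.add {v w : Ω → ℝ} (hv : BddMeas v) (hw : BddMeas w) : BddMeas (v + w) := by
  obtain ⟨a, ha⟩ := hv.2
  obtain ⟨b, hb⟩ := hw.2
  exact ⟨hv.1.add hw.1, a + b, fun ω => (abs_add_le _ _).trans (add_le_add (ha ω) (hb ω))⟩

theorem BddMeas.smul {v : Ω → ℝ} (hv : BddMeas v) (c : ℝ) : BddMeas (c • v) := by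
  obtain ⟨a, ha⟩ := hv.2
  refine ⟨hv.1.const_smul c, |c| * a, fun ω => ?_⟩
  simp only [Pi.smul_apply, smul_eq_mul, abs_mul]
  exact mul_le_mul_of_nonneg_left (ha ω) (abs_nonneg _)

theorem bddMeas_ind {s : Set Ω} (hs : MeasurableSet s) :
    BddMeas (s.indicator (fun _ => (1 : ℝ))) := by
  refine ⟨measurable_const.indicator hs, 1, fun ω => ?_⟩
  by_cases h : ω ∈ s <;> simp [h]

theorem ind_abs_le (s : Set Ω) (ω : Ω) : |s.indicator (fun _ => (1 : ℝ)) ω| ≤ 1 := by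
  by_cases h : ω ∈ s <;> simp [h]

theorem aux_cont (P : Measure Ω) [IsProbabilityMeasure P] (G : (Ω → ℝ) → ℝ)
    (hadd : ∀ f g, BddMeas f → BddMeas g → G (f + g) = G f + G g)
    (hsmul : ∀ (c : ℝ) f, BddMeas f → G (c • f) = c * G f) (κ : ℝ) (hκ : 0 ≤ κ)
    (hsm : ∀ n : ℕ, ∃ ε : ℝ, 0 < ε ∧ ∀ v, BddMeas v → (∀ ω, |v ω| ≤ n) →
      ∫ ω, (v ω) ^ 2 ∂P ≤ ε → G v ≤ κ)
    (v : ℕ → Ω → ℝ) (w : Ω → ℝ) (M : ℝ) (hv : ∀ j, Measurable (v j)) (hw : Measurable w)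
    (hvM : ∀ j ω, |v j ω| ≤ M) (hwM : ∀ ω, |w ω| ≤ M)
    (hlim : ∀ᵐ ω ∂P, Tendsto (fun j => v j ω) atTop (𝓝 (w ω))) :
    Tendsto (fun j => G (v j)) atTop (𝓝 (G w)) := by
  have hvb : ∀ j, BddMeas (v j) := fun j => ⟨hv j, M, hvM j⟩
  have hwb : BddMeas w := ⟨hw, M, hwM⟩
  rw [Metric.tendsto_atTop']
  intro η hη
  set t : ℝ := (κ + 1) / η with ht
  have htp : 0 < t := by positivity
  obtain ⟨N, hN⟩ := exists_nat_ge (t * (M + M))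
  obtain ⟨ε, hε, h⟩ := hsm N
  have hI : Tendsto (fun j => ∫ ω, (t * (v j ω - w ω)) ^ 2 ∂P) atTop (𝓝 (∫ ω, (0 : ℝ) ∂P)) := by
    refine tendsto_integral_of_dominated_convergence (fun _ => (t * (M + M)) ^ 2) ?_
      (integrable_const _) ?_ ?_
    · intro j
      exact ((((hv j).sub hw).const_mul t).pow_const 2).aestronglyMeasurable
    · intro j
      refine Eventually.of_forall fun ω => ?_
      rw [Real.norm_eq_abs, abs_pow, abs_mul, abs_of_pos htp]
      gcongr
      exact (abs_sub _ _).trans (add_le_add (hvM j ω) (hwM ω))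
    · filter_upwards [hlim] with ω hω
      have : Tendsto (fun j => (t * (v j ω - w ω)) ^ 2) atTop (𝓝 ((t * (w ω - w ω)) ^ 2)) :=
        ((hω.sub_const _).const_mul t).pow 2
      simpa using this
  simp only [integral_zero] at hI
  have hev : ∀ᶠ j in atTop, ∫ ω, (t * (v j ω - w ω)) ^ 2 ∂P < ε := hI.eventually (gt_mem_nhds hε)
  obtain ⟨J, hJ⟩ := eventually_atTop.mp hev
  refine ⟨J, fun j hj => ?_⟩
  have hd : BddMeas (v j + (-1 : ℝ) • w) := (hvb j).add (hwb.smul _)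
  have key : ∀ s : ℝ, |s| = t → s * (G (v j) - G w) ≤ κ := by
    intro s hs
    have e1 : G (s • (v j + (-1 : ℝ) • w)) = s * (G (v j) - G w) := by
      rw [hsmul _ _ hd, hadd _ _ (hvb j) (hwb.smul _), hsmul _ _ hwb]; ring
    rw [← e1]
    refine h _ (hd.smul s) (fun ω => ?_) ?_
    · simp only [Pi.smul_apply, Pi.add_apply, smul_eq_mul, abs_mul, hs]
      refine le_trans ?_ hN
      gcongr
      refine (abs_add_le _ _).trans (add_le_add (hvM j ω) ?_)
      simpa using hwM ω
    · refine le_trans (le_of_eq ?_) (hJ j hj.le).le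
      congr 1
      ext ω
      simp only [Pi.smul_apply, Pi.add_apply, smul_eq_mul]
      rw [mul_pow, mul_pow, ← sq_abs s, hs]
      ring
  have k1 := key t (abs_of_pos htp)
  have k2 := key (-t) (by rw [abs_neg, abs_of_pos htp])
  have hte : t * η = κ + 1 := by rw [ht]; field_simp
  rw [Real.dist_eq, abs_lt]
  constructor <;> nlinarith

theorem aux_meas (P : Measure Ω) [IsProbabilityMeasure P] (G : (Ω → ℝ) → ℝ)
    (hadd : ∀ f g, BddMeas f → BddMeas g → G (f + g) = G f + G g)
    (hsmul : ∀ (c : ℝ) f, BddMeas f → G (c • f) = c * G f) (κ : ℝ) (hκ : 0 ≤ κ)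
    (hsm : ∀ n : ℕ, ∃ ε : ℝ, 0 < ε ∧ ∀ v, BddMeas v → (∀ ω, |v ω| ≤ n) →
      ∫ ω, (v ω) ^ 2 ∂P ≤ ε → G v ≤ κ)
    (hpos : ∀ v, BddMeas v → (∀ ω, 0 ≤ v ω) → 0 ≤ G v) :
    ∃ μ : Measure Ω, IsFiniteMeasure μ ∧ μ ≪ P ∧ ∀ Y, BddMeas Y → ∫ ω, Y ω ∂μ = G Y := by
  have hcont := aux_cont P G hadd hsmul κ hκ hsm
  have h0b : BddMeas (0 : Ω → ℝ) := ⟨measurable_const, 0, fun ω => by simp⟩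
  have h0 : G 0 = 0 := by
    have := hsmul 0 0 h0b
    simpa using this
  have hsum : ∀ (I : Finset ℕ) (f : ℕ → Ω → ℝ), (∀ i, BddMeas (f i)) →
      BddMeas (∑ i ∈ I, f i) ∧ G (∑ i ∈ I, f i) = ∑ i ∈ I, G (f i) := by
    intro I f hf
    induction I using Finset.induction_on with
    | empty => simp [h0, h0b]
    | insert a I ha ih =>
      rw [Finset.sum_insert ha, Finset.sum_insert ha]
      exact ⟨(hf a).add ih.1, by rw [hadd _ _ (hf a) ih.1, ih.2]⟩
  have hind0 : ∀ s : Set Ω, 0 ≤ G (s.indicator (fun _ => (1 : ℝ))) ∨ ¬ MeasurableSet s := by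
    intro s
    by_cases hs : MeasurableSet s
    · exact Or.inl (hpos _ (bddMeas_ind hs) (fun ω => Set.indicator_nonneg (by simp) ω))
    · exact Or.inr hs
  let μ : Measure Ω := Measure.ofMeasurable
    (fun s _ => ENNReal.ofReal (G (s.indicator (fun _ => (1 : ℝ)))))
    (by
      have : (∅ : Set Ω).indicator (fun _ => (1 : ℝ)) = 0 := by ext; simp
      rw [this, h0, ENNReal.ofReal_zero])
    (by
      intro f hf hdis
      refine tendsto_nhds_unique ?_ (ENNReal.tendsto_nat_tsum _)
      have h1 : ∀ n, ∑ i ∈ Finset.range n, ENNReal.ofReal (G ((f i).indicator (fun _ => (1 : ℝ))))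
          = ENNReal.ofReal (G ((⋃ i ∈ Finset.range n, f i).indicator (fun _ => (1 : ℝ)))) := by
        intro n
        rw [← ENNReal.ofReal_sum_of_nonneg
          (fun i _ => (hind0 (f i)).resolve_right (not_not.mpr (hf i)))]
        rw [← (hsum _ _ (fun i => bddMeas_ind (hf i))).2]
        congr 2
        ext ω
        rw [Finset.indicator_biUnion _ _ (fun i _ j _ hij => hdis hij), Finset.sum_apply]
      simp only [h1]
      refine (ENNReal.continuous_ofReal.tendsto _).comp ?_
      refine hcont _ _ 1 (fun n => (bddMeas_ind ?_).1) (bddMeas_ind (MeasurableSet.iUnion hf)).1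
        (fun n ω => ind_abs_le _ _) (fun ω => ind_abs_le _ _) (Eventually.of_forall fun ω => ?_)
      · exact Finset.measurableSet_biUnion _ (fun i _ => hf i)
      · exact ((tendsto_indicator_biUnion_finset f (fun _ => (1 : ℝ)) ω).mono_right
          (pure_le_nhds _)).comp tendsto_finset_range)
  have hμ : ∀ s, MeasurableSet s → μ s = ENNReal.ofReal (G (s.indicator (fun _ => (1 : ℝ)))) :=
    fun s hs => Measure.ofMeasurable_apply s hs
  have hfin : IsFiniteMeasure μ := ⟨by rw [hμ _ MeasurableSet.univ]; exact ENNReal.ofReal_lt_top⟩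
  refine ⟨μ, hfin, ?_, ?_⟩
  · refine Measure.AbsolutelyContinuous.mk fun s hs hPs => ?_
    rw [hμ s hs]
    have h1 : Tendsto (fun _ : ℕ => G (s.indicator (fun _ => (1 : ℝ)))) atTop (𝓝 (G 0)) := by
      refine hcont (fun _ => s.indicator (fun _ => (1 : ℝ))) 0 1 (fun _ => (bddMeas_ind hs).1)
        measurable_const (fun _ ω => ind_abs_le _ _) (fun ω => by simp) ?_
      have : ∀ᵐ ω ∂P, ω ∉ s := measure_eq_zero_iff_ae_notMem.mp hPs
      filter_upwards [this] with ω hω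
      simp [hω]
    rw [h0] at h1
    rw [tendsto_nhds_unique tendsto_const_nhds h1, ENNReal.ofReal_zero]
  · have hsb : ∀ s : SimpleFunc Ω ℝ, BddMeas s := fun s => by
      obtain ⟨C, hC⟩ := s.exists_forall_norm_le
      exact ⟨s.measurable, C, hC⟩
    have hint : ∀ Y, BddMeas Y → Integrable Y μ := fun Y hY => by
      obtain ⟨c, hc⟩ := hY.2
      exact Integrable.of_bound hY.1.aestronglyMeasurable c (Eventually.of_forall hc)
    have hsimple : ∀ s : SimpleFunc Ω ℝ, ∫ ω, s ω ∂μ = G s := by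
      intro s
      induction s using SimpleFunc.induction with
      | @const c s hs =>
        have e : (⇑(SimpleFunc.piecewise s hs (SimpleFunc.const Ω c) (SimpleFunc.const Ω 0)) : Ω → ℝ)
            = c • s.indicator (fun _ => (1 : ℝ)) := by
          ext ω
          by_cases h : ω ∈ s <;> simp [h]
        rw [e, hsmul _ _ (bddMeas_ind hs)]
        simp only [Pi.smul_apply, smul_eq_mul]
        rw [integral_const_mul, integral_indicator hs]
        simp only [integral_const, smul_eq_mul, mul_one, measureReal_restrict_apply_univ]
        rw [Measure.real, hμ s hs, ENNReal.toReal_ofReal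
          ((hind0 s).resolve_right (not_not.mpr hs))]
      | @add f g _ hf hg =>
        rw [SimpleFunc.coe_add, hadd _ _ (hsb f) (hsb g), ← hf, ← hg]
        exact integral_add (hint _ (hsb f)) (hint _ (hsb g))
    intro Y hY
    obtain ⟨c, hc⟩ := hY.2
    have hc0 : ∀ ω : Ω, 0 ≤ c := fun ω => (abs_nonneg _).trans (hc ω)
    by_cases hcc : 0 ≤ c
    · have hYm := hY.1.stronglyMeasurable
      have hl : ∀ ω, Tendsto (fun n => hYm.approxBounded c n ω) atTop (𝓝 (Y ω)) := fun ω =>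
        hYm.tendsto_approxBounded_of_norm_le (hc ω)
      have hb : ∀ n ω, ‖hYm.approxBounded c n ω‖ ≤ c := fun n ω =>
        hYm.norm_approxBounded_le hcc n ω
      have l1 : Tendsto (fun n => G (hYm.approxBounded c n)) atTop (𝓝 (G Y)) :=
        hcont (fun n => hYm.approxBounded c n) Y c (fun n => (hYm.approxBounded c n).measurable)
          hY.1 hb hc (Eventually.of_forall hl)
      have l2 : Tendsto (fun n => ∫ ω, hYm.approxBounded c n ω ∂μ) atTop (𝓝 (∫ ω, Y ω ∂μ)) :=
        tendsto_integral_of_dominated_convergence (fun _ => c)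
          (fun n => (hYm.approxBounded c n).measurable.aestronglyMeasurable)
          (integrable_const _) (fun n => Eventually.of_forall (hb n)) (Eventually.of_forall hl)
      simp only [hsimple] at l2
      exact tendsto_nhds_unique l2 l1
    · have : IsEmpty Ω := ⟨fun ω => hcc (hc0 ω)⟩
      have : Y = 0 := Subsingleton.elim _ _
      rw [this, h0]
      simp
end meas

section main
variable {Ω : Type*} [MeasurableSpace Ω]

theorem Polar.mono {Ps : Set (Measure Ω)} {N M : Set Ω} (h : Polar Ps N) (hs : M ⊆ N) :
    Polar Ps M := by
  obtain ⟨N', h1, h2, h3⟩ := h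
  exact ⟨N', h1, hs.trans h2, h3⟩

theorem Polar.union {Ps : Set (Measure Ω)} {N M : Set Ω} (h : Polar Ps N) (h' : Polar Ps M) :
    Polar Ps (N ∪ M) := by
  obtain ⟨N', h1, h2, h3⟩ := h
  obtain ⟨M', h1', h2', h3'⟩ := h'
  exact ⟨N' ∪ M', h1.union h1', Set.union_subset_union h2 h2', fun P hP =>
    measure_union_null (h3 P hP) (h3' P hP)⟩

theorem polar_of_forall {Ps : Set (Measure Ω)} {p : Ω → Prop} (h : ∀ ω, ¬ p ω) :
    Polar Ps {ω | p ω} :=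
  ⟨∅, MeasurableSet.empty, fun ω hω => absurd hω (h ω), fun _ _ => measure_empty⟩

theorem Polar.ae {Ps : Set (Measure Ω)} {p : Ω → Prop} (h : Polar Ps {ω | p ω})
    {P : Measure Ω} (hP : P ∈ Ps) : ∀ᵐ ω ∂P, ¬ p ω := by
  obtain ⟨N', h1, h2, h3⟩ := h
  have : ∀ᵐ ω ∂P, ω ∉ N' := measure_eq_zero_iff_ae_notMem.mp (h3 P hP)
  filter_upwards [this] with ω hω hp
  exact hω (h2 hp)

theorem aux_back (Ps : Set (Measure Ω)) (W : Ω → ℝ) (Kc : Set (Ω → ℝ))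
    (h : ∀ A : Set Ω, MeasurableSet A → ¬ Polar Ps A →
        ∀ n : ℕ, 1 ≤ n →
          ∃ δ : ℝ, 0 < δ ∧ δ ≤ 1 / (n : ℝ) ∧ ∃ Q ∈ PW Ps W,
            ENNReal.ofReal ((n : ℝ) * δ) < Q A ∧
            ∀ X ∈ coneCTildeLam Ps W Kc (n : ℝ), ∫ ω, X ω ∂Q < δ)
    (hW1 : ∀ ω, 1 ≤ W ω)
    (X : Ω → ℝ) (hX : BddMeas X) (hX0 : LeQS Ps (fun _ => 0) X) (hXC : X ∈ coneCHat Ps W Kc) :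
    EqQS Ps X (fun _ => 0) := by
  have hpos : ∀ m : ℕ, Polar Ps {ω | 1 / ((m : ℝ) + 1) ≤ X ω} := by
    intro m
    by_contra hnp
    have hA : MeasurableSet {ω | 1 / ((m : ℝ) + 1) ≤ X ω} := measurableSet_le measurable_const hX.1
    simp only [coneCHat, Set.mem_iUnion] at hXC
    obtain ⟨l, hl0, hXl⟩ := hXC
    obtain ⟨N, hN⟩ := exists_nat_ge l
    set n := max N (m + 1) with hn
    have hnN : l ≤ (n : ℝ) := hN.trans (by exact_mod_cast le_max_left _ _)
    have hnm : (m : ℝ) + 1 ≤ (n : ℝ) := by exact_mod_cast le_max_right _ _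
    obtain ⟨δ, hδ, -, Q, ⟨hQp, ⟨P, hP, hQP⟩, -⟩, hQA, hQX⟩ :=
      h _ hA hnp n (le_trans (by omega) (le_max_right _ _))
    have hXn : X ∈ coneCTildeLam Ps W Kc (n : ℝ) := by
      refine ⟨hXl.1, fun P hP => ?_⟩
      obtain ⟨k, hk, hXk⟩ := hXl.2 P hP
      refine ⟨k, ⟨hk.1, hk.2.mono ?_⟩, hXk⟩
      intro ω hω hle
      refine hω (le_trans ?_ hle)
      nlinarith [hW1 ω]
    have h1 := hQX X hXn
    have h2 : ∫ ω, {ω | 1 / ((m : ℝ) + 1) ≤ X ω}.indicator (fun _ => 1 / ((m : ℝ) + 1)) ω ∂Q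
        ≤ ∫ ω, X ω ∂Q := by
      refine integral_mono_ae ((integrable_const _).indicator hA) ?_ ?_
      · obtain ⟨c, hc⟩ := hX.2
        exact Integrable.of_bound hX.1.aestronglyMeasurable c (Eventually.of_forall hc)
      · filter_upwards [hQP.ae_le (hX0.ae hP)] with ω hω
        rw [not_not] at hω
        by_cases hh : ω ∈ {ω | 1 / ((m : ℝ) + 1) ≤ X ω}
        · rw [Set.indicator_of_mem hh]; exact hh
        · rw [Set.indicator_of_notMem hh]; exact hω
    rw [integral_indicator hA] at h2
    simp only [integral_const, smul_eq_mul, measureReal_restrict_apply_univ] at h2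
    rw [ENNReal.ofReal_lt_iff_lt_toReal (by positivity) (measure_ne_top _ _)] at hQA
    change _ < Q.real _ at hQA
    set q := Q.real {ω | 1 / ((m : ℝ) + 1) ≤ X ω}
    rw [mul_one_div, div_le_iff₀ (by positivity)] at h2
    have hm0 : (0 : ℝ) ≤ m := Nat.cast_nonneg m
    nlinarith
  choose N hN1 hN2 hN3 using hpos
  obtain ⟨M, hM1, hM2, hM3⟩ := hX0
  refine ⟨M ∪ ⋃ m, N m, hM1.union (MeasurableSet.iUnion hN1), ?_, fun P hP =>
    measure_union_null (hM3 P hP) (measure_iUnion_null fun m => hN3 m P hP)⟩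
  intro ω hω
  by_cases hh : 0 ≤ X ω
  · have : 0 < X ω := lt_of_le_of_ne hh (Ne.symm hω)
    obtain ⟨m, hm⟩ := exists_nat_one_div_lt this
    exact Or.inr (Set.mem_iUnion.mpr ⟨m, hN2 m hm.le⟩)
  · exact Or.inl (hM2 hh)

theorem aux_closed (Ps : Set (Measure Ω))
    (W : Ω → ℝ) (hWmeas : Measurable W) (hW1 : ∀ ω, 1 ≤ W ω)
    (Kc : Set (Ω → ℝ)) (hFatou : FatouClosed Ps W (coneC Ps W Kc))
    (P : Measure Ω) (hP : P ∈ Ps) (l : ℝ) (hl : 0 ≤ l) (r : ℝ)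
    (f : ℕ → Ω → ℝ) (g : Ω → ℝ)
    (hf : ∀ i, Measurable (f i) ∧ ∃ k ∈ Klam Ps W Kc l, ∀ᵐ ω ∂P, W ω * f i ω ≤ k ω)
    (hfr : ∀ i, ∀ᵐ ω ∂P, |f i ω| ≤ r) (hg : Measurable g)
    (hlim : ∀ᵐ ω ∂P, Tendsto (fun i => f i ω) atTop (𝓝 (g ω))) :
    ∃ k ∈ Klam Ps W Kc l, ∀ᵐ ω ∂P, W ω * g ω ≤ k ω := by
  classical
  choose hfm k hk hfk using hf
  have hall : ∀ᵐ ω ∂P, (∀ i, W ω * f i ω ≤ k i ω) ∧ (∀ i, |f i ω| ≤ r) ∧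
      Tendsto (fun i => f i ω) atTop (𝓝 (g ω)) := by
    filter_upwards [ae_all_iff.mpr hfk, ae_all_iff.mpr hfr, hlim] with ω h1 h2 h3
    exact ⟨h1, h2, h3⟩
  obtain ⟨N, hNsub, hNm, hN0⟩ := exists_measurable_superset_of_null (ae_iff.mp hall)
  have hNc : ∀ ω, ω ∉ N → (∀ i, W ω * f i ω ≤ k i ω) ∧ (∀ i, |f i ω| ≤ r) ∧
      Tendsto (fun i => f i ω) atTop (𝓝 (g ω)) := by
    intro ω hω
    by_contra hcon
    exact hω (hNsub hcon)
  set Z : (Ω → ℝ) → Ω → ℝ := fun h ω => if ω ∈ N then -l * W ω else max (W ω * h ω) (-l * W ω)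
    with hZ
  have hZm : ∀ h, Measurable h → Measurable (Z h) := fun h hh =>
    Measurable.ite hNm (hWmeas.const_mul _) ((hWmeas.mul hh).max (hWmeas.const_mul _))
  have hZb : ∀ h : Ω → ℝ, (∀ ω, ω ∉ N → |h ω| ≤ r) → |r| + l ∈ Bounds Ps W (Z h) := by
    intro h hh
    refine ⟨by positivity, polar_of_forall fun ω => ?_⟩
    rw [not_lt]
    have hw := hW1 ω
    have hr := abs_nonneg r
    simp only [hZ]
    split_ifs with hω
    · rw [neg_mul, abs_neg, abs_of_nonneg (by positivity)]
      nlinarith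
    · have h1 := abs_le.mp ((hh ω hω).trans (le_abs_self r))
      rw [abs_le]
      constructor
      · refine le_trans ?_ (le_max_right _ _)
        nlinarith
      · refine max_le ?_ ?_ <;> nlinarith
  have hgr : ∀ ω, ω ∉ N → |g ω| ≤ r := fun ω hω =>
    le_of_tendsto (hNc ω hω).2.2.abs (Eventually.of_forall (hNc ω hω).2.1)
  have hmem := hFatou (fun i => Z (f i))
    (fun i => ⟨⟨hZm _ (hfm i), _, hZb _ (fun ω hω => (hNc ω hω).2.1 i)⟩, k i, (hk i).1, by
      refine (hk i).2.mono ?_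
      intro ω hω hle
      refine hω ?_
      simp only [hZ]
      split_ifs with hωN
      · exact hle
      · exact max_le ((hNc ω hωN).1 i) hle⟩)
    ⟨_, fun i => hZb _ (fun ω hω => (hNc ω hω).2.1 i)⟩ (Z g) ⟨hZm g hg, _, hZb g hgr⟩
    (polar_of_forall fun ω => by
      rw [not_not]
      simp only [hZ]
      split_ifs with hωN
      · exact tendsto_const_nhds
      · exact ((hNc ω hωN).2.2.const_mul _).max tendsto_const_nhds)
  obtain ⟨-, k', hk', hle⟩ := hmem
  refine ⟨k', ⟨hk', hle.mono ?_⟩, ?_⟩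
  · intro ω hω hle'
    refine hω (le_trans ?_ hle')
    simp only [hZ]
    split_ifs with hωN
    · exact le_rfl
    · exact le_max_right _ _
  · have h1 : ∀ᵐ ω ∂P, ω ∉ N := measure_eq_zero_iff_ae_notMem.mp hN0
    filter_upwards [h1, hle.ae hP] with ω h1 h2
    rw [not_not] at h2
    refine le_trans ?_ h2
    simp only [hZ, if_neg h1]
    exact le_max_left _ _

theorem aux_forward (Ps : Set (Measure Ω))
    (hPsprob : ∀ P ∈ Ps, IsProbabilityMeasure P)
    (W : Ω → ℝ) (hWmeas : Measurable W) (hW1 : ∀ ω, 1 ≤ W ω)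
    (Kc : Set (Ω → ℝ)) (hKc : IsConvexCone Kc)
    (hFatou : FatouClosed Ps W (coneC Ps W Kc))
    (hNA : ∀ X : Ω → ℝ, BddMeas X → LeQS Ps (fun _ => 0) X → X ∈ coneCHat Ps W Kc →
        EqQS Ps X (fun _ => 0))
    (A : Set Ω) (hA : MeasurableSet A) (hAp : ¬ Polar Ps A) (n : ℕ) (hn : 1 ≤ n) :
    ∃ δ : ℝ, 0 < δ ∧ δ ≤ 1 / (n : ℝ) ∧ ∃ Q ∈ PW Ps W,
      ENNReal.ofReal ((n : ℝ) * δ) < Q A ∧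
      ∀ X ∈ coneCTildeLam Ps W Kc (n : ℝ), ∫ ω, X ω ∂Q < δ := by
  have hn0 : (0 : ℝ) < n := by exact_mod_cast hn
  have hW0 : ∀ ω, 0 < W ω := fun ω => one_pos.trans_le (hW1 ω)
  -- choose the measure
  obtain ⟨P, hP, hPk⟩ : ∃ P ∈ Ps, ∀ k ∈ Klam Ps W Kc n,
      ¬ ∀ᵐ ω ∂P, (1 / (n : ℝ)) * A.indicator (fun _ => 1) ω ≤ k ω := by
    by_contra hcon
    push Not at hcon
    have hb : BddMeas (fun ω => (1 / (n : ℝ)) * A.indicator (fun _ => 1) ω) :=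
      (bddMeas_ind hA).smul (1 / (n : ℝ))
    have hnn : ∀ ω, 0 ≤ (1 / (n : ℝ)) * A.indicator (fun _ => (1 : ℝ)) ω := fun ω =>
      mul_nonneg (by positivity) (Set.indicator_nonneg (by simp) ω)
    refine hAp ((hNA _ hb (polar_of_forall fun ω => not_not.mpr (hnn ω)) ?_).mono ?_)
    · simp only [coneCHat, Set.mem_iUnion]
      refine ⟨n, hn0.le, ⟨hb.1, ?_⟩, hcon⟩
      obtain ⟨c, hc⟩ := hb.2
      refine ⟨|c|, abs_nonneg _, polar_of_forall fun ω => ?_⟩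
      rw [not_lt]
      refine (hc ω).trans ((le_abs_self c).trans ?_)
      nlinarith [abs_nonneg c, hW1 ω]
    · intro ω hω
      show (1 / (n : ℝ)) * A.indicator (fun _ => (1 : ℝ)) ω ≠ 0
      rw [Set.indicator_of_mem hω]
      positivity
  have := hPsprob P hP
  obtain ⟨hKm, hK0, hKs, hKa⟩ := hKc
  set D : Set (Ω → ℝ) := {f | Measurable f ∧ ∃ k ∈ Klam Ps W Kc n, ∀ᵐ ω ∂P, W ω * f ω ≤ k ω}
    with hD
  have h0K : (fun _ => (0 : ℝ)) ∈ Klam Ps W Kc n :=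
    ⟨hK0, polar_of_forall fun ω => by
      rw [not_not]
      nlinarith [hW0 ω]⟩
  have h0D : (0 : Ω → ℝ) ∈ D := ⟨measurable_const, _, h0K, Eventually.of_forall fun ω => by simp⟩
  have hsol : ∀ f ∈ D, ∀ g, Measurable g → g ≤ᵐ[P] f → g ∈ D := by
    rintro f ⟨hf, k, hk, hfk⟩ g hg hgf
    refine ⟨hg, k, hk, ?_⟩
    filter_upwards [hfk, hgf] with ω h1 h2
    exact (mul_le_mul_of_nonneg_left h2 (hW0 ω).le).trans h1
  set y : Ω → ℝ := fun ω => (1 / (n : ℝ)) * A.indicator (fun _ => 1) ω / W ω with hy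
  have hinvle : ∀ ω, (W ω)⁻¹ ≤ 1 := fun ω => inv_le_one_of_one_le₀ (hW1 ω)
  have hinv0 : ∀ ω, 0 < (W ω)⁻¹ := fun ω => inv_pos.mpr (hW0 ω)
  have hyb : BddMeas y := by
    refine ⟨((measurable_const.indicator hA).const_mul _).div hWmeas, 1 / (n : ℝ), fun ω => ?_⟩
    simp only [hy]
    rw [div_eq_mul_inv, abs_mul, abs_mul, abs_of_pos (hinv0 ω), abs_of_pos (by positivity : (0 : ℝ) < 1 / n),
      mul_assoc]
    refine mul_le_of_le_one_right (by positivity) ?_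
    exact mul_le_one₀ (ind_abs_le A ω) (hinv0 ω).le (hinvle ω)
  obtain ⟨G, hadd, hsmul, α, κ, hκ, hGD, hGy, hsm⟩ := aux_sep P D
    (by
      rintro f ⟨hf, k, hk, hfk⟩ g ⟨hg, k', hk', hgk⟩ a b ha hb hab
      refine ⟨(hf.const_mul a).add (hg.const_mul b), fun ω => a * k ω + b * k' ω,
        ⟨hKa _ (hKs k hk.1 a ha) _ (hKs k' hk'.1 b hb), ?_⟩, ?_⟩
      · refine (hk.2.union hk'.2).mono ?_
        intro ω hω
        by_contra hcon
        simp only [Set.mem_union, Set.mem_ofPred_eq, not_or, not_not] at hcon hω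
        refine hω ?_
        obtain rfl : b = 1 - a := by linarith
        nlinarith
      · filter_upwards [hfk, hgk] with ω h1 h2
        nlinarith)
    hsol
    (by
      intro r f g hf hfr hg hlim
      exact ⟨hg, aux_closed Ps W hWmeas hW1 Kc hFatou P hP n hn0.le r f g hf hfr hg hlim⟩)
    y hyb
    (by
      rintro ⟨-, k, hk, hle⟩
      refine hPk k hk ?_
      filter_upwards [hle] with ω hω
      simp only [hy] at hω
      rwa [mul_div_cancel₀ _ (hW0 ω).ne'] at hω)
  have h0b : BddMeas (0 : Ω → ℝ) := ⟨measurable_const, 0, fun ω => by simp⟩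
  have hG0 : G 0 = 0 := by
    have := hsmul 0 0 h0b
    simpa using this
  have hα : 0 ≤ α := by rw [← hG0]; exact hGD 0 h0D h0b
  have hpos : ∀ v, BddMeas v → (∀ ω, 0 ≤ v ω) → 0 ≤ G v := by
    intro v hv hv0
    by_contra hneg
    push Not at hneg
    have h1 : ∀ t : ℝ, 0 ≤ t → -t * G v ≤ α := by
      intro t ht
      rw [← hsmul _ _ hv]
      refine hGD _ (hsol 0 h0D _ (hv.smul _).1 (Eventually.of_forall fun ω => ?_)) (hv.smul _)
      simp only [Pi.smul_apply, smul_eq_mul, Pi.zero_apply]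
      nlinarith [hv0 ω]
    have h2 := h1 ((α + 1) / (- G v)) (div_nonneg (by linarith) (by linarith))
    have h3 : (α + 1) / (- G v) * (- G v) = α + 1 := div_mul_cancel₀ _ (by linarith)
    linarith
  obtain ⟨μ, hμf, hμP, hμG⟩ := aux_meas P G hadd hsmul κ hκ hsm hpos
  rw [← hμG y hyb] at hGy
  have hintb : ∀ Y, BddMeas Y → Integrable Y μ := fun Y hY => by
    obtain ⟨c, hc⟩ := hY.2
    exact Integrable.of_bound hY.1.aestronglyMeasurable c (Eventually.of_forall hc)
  have hWb : BddMeas (fun ω => (W ω)⁻¹) :=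
    ⟨hWmeas.inv, 1, fun ω => by rw [abs_of_pos (hinv0 ω)]; exact hinvle ω⟩
  set c := ∫ ω, (W ω)⁻¹ ∂μ with hc
  have hc0 : 0 < c := by
    have h1 : ∫ ω, y ω ∂μ ≤ ∫ ω, (1 / (n : ℝ)) * (W ω)⁻¹ ∂μ := by
      refine integral_mono (hintb _ hyb) ((hintb _ hWb).const_mul _) fun ω => ?_
      simp only [hy]
      rw [div_eq_mul_inv, mul_assoc]
      have := (le_abs_self _).trans (ind_abs_le A ω)
      have h3 := hinv0 ω
      gcongr
      exact mul_le_of_le_one_left h3.le this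
    rw [integral_const_mul, ← hc] at h1
    have h2 : 0 < 1 / (n : ℝ) * c := by linarith
    exact (mul_pos_iff_of_pos_left (by positivity)).mp h2
  set d : Ω → NNReal := fun ω => Real.toNNReal (c⁻¹ * (W ω)⁻¹) with hd
  have hdm : Measurable d := (hWmeas.inv.const_mul _).real_toNNReal
  have hdc : ∀ ω, (d ω : ℝ) = c⁻¹ * (W ω)⁻¹ := fun ω =>
    Real.coe_toNNReal _ (mul_nonneg (inv_nonneg.mpr hc0.le) (hinv0 ω).le)
  set Q : Measure Ω := μ.withDensity (fun ω => (d ω : ENNReal)) with hQ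
  have hQi : ∀ X : Ω → ℝ, ∫ ω, X ω ∂Q = c⁻¹ * ∫ ω, X ω / W ω ∂μ := by
    intro X
    rw [hQ, integral_withDensity_eq_integral_smul hdm, ← integral_const_mul]
    congr 1
    ext ω
    rw [NNReal.smul_def, hdc, smul_eq_mul]
    field_simp
  have hQprob : IsProbabilityMeasure Q := by
    constructor
    rw [hQ, withDensity_apply _ MeasurableSet.univ, Measure.restrict_univ]
    have : ∀ ω, (d ω : ENNReal) = ENNReal.ofReal (c⁻¹ * (W ω)⁻¹) := fun ω => rfl
    simp only [this]
    rw [← ofReal_integral_eq_lintegral_ofReal ((hintb _ hWb).const_mul _)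
      (Eventually.of_forall fun ω => mul_nonneg (inv_nonneg.mpr hc0.le) (hinv0 ω).le),
      integral_const_mul, ← hc, inv_mul_cancel₀ hc0.ne', ENNReal.ofReal_one]
  have hQP : Q ≪ P := (withDensity_absolutelyContinuous _ _).trans hμP
  have hQW : Integrable W Q := by
    rw [hQ, integrable_withDensity_iff_integrable_smul hdm]
    have : (fun ω => d ω • W ω) = fun _ => c⁻¹ := by
      ext ω
      rw [NNReal.smul_def, hdc, smul_eq_mul, mul_assoc, inv_mul_cancel₀ (hW0 ω).ne', mul_one]
    rw [this]
    exact integrable_const _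
  have hQA : Q.real A = n * (c⁻¹ * ∫ ω, y ω ∂μ) := by
    have h1 : ∫ ω, A.indicator (fun _ => (1 : ℝ)) ω ∂Q = Q.real A := by
      rw [integral_indicator hA]; simp
    rw [← h1, hQi, ← mul_assoc, mul_comm (n : ℝ), mul_assoc, ← integral_const_mul (n : ℝ)]
    congr 2
    ext ω
    simp only [hy]
    field_simp
  have hQA1 : Q.real A ≤ 1 := measureReal_le_one
  set I := ∫ ω, y ω ∂μ
  have hci : 0 < c⁻¹ := inv_pos.mpr hc0
  have hlt : c⁻¹ * α < c⁻¹ * I := mul_lt_mul_of_pos_left hGy hci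
  have hca : 0 ≤ c⁻¹ * α := mul_nonneg hci.le hα
  have hIn : c⁻¹ * I ≤ 1 / n := by
    rw [le_div_iff₀ hn0]
    linarith
  refine ⟨(c⁻¹ * α + c⁻¹ * I) / 2, by linarith, by linarith, Q, ⟨hQprob, ⟨P, hP, hQP⟩, hQW⟩, ?_, ?_⟩
  · rw [ENNReal.ofReal_lt_iff_lt_toReal (mul_nonneg hn0.le (by linarith)) (measure_ne_top _ _)]
    change _ < Q.real A
    rw [hQA]
    exact mul_lt_mul_of_pos_left (by linarith) hn0
  · rintro X ⟨⟨hXm, m, hm0, hmb⟩, hXk⟩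
    obtain ⟨k, hk, hXk⟩ := hXk P hP
    rw [hQi]
    set Y : Ω → ℝ := fun ω => max (-m) (min m (X ω / W ω)) with hY
    have hYX : ∀ᵐ ω ∂P, X ω / W ω = Y ω := by
      filter_upwards [hmb.ae hP] with ω hω
      rw [not_lt, abs_le] at hω
      have h1 : X ω / W ω ≤ m := (div_le_iff₀ (hW0 ω)).mpr hω.2
      have h2 : -m ≤ X ω / W ω := (le_div_iff₀ (hW0 ω)).mpr (by linarith [hω.1])
      simp only [hY]
      rw [min_eq_right h1, max_eq_right h2]
    have hYb : BddMeas Y := by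
      refine ⟨measurable_const.max (measurable_const.min (hXm.div hWmeas)), m, fun ω => ?_⟩
      rw [abs_le]
      exact ⟨le_max_left _ _, max_le (by linarith) (min_le_left _ _)⟩
    have hYD : Y ∈ D := by
      refine ⟨hYb.1, k, hk, ?_⟩
      filter_upwards [hYX, hXk] with ω h1 h2
      rw [← h1, mul_div_cancel₀ _ (hW0 ω).ne']
      exact h2
    have h1 : ∫ ω, X ω / W ω ∂μ = ∫ ω, Y ω ∂μ := integral_congr_ae (hμP.ae_le hYX)
    rw [h1, hμG Y hYb]
    have h2 := mul_le_mul_of_nonneg_left (hGD Y hYD hYb) hci.le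
    linarith
end main

/-- **Theorem (`FTAP1`).** Assume `𝒞` is Fatou closed. Then sNABR holds iff for
every non-polar `A` and every `n ≥ 1` there are `0 < δ_n ≤ 1/n` and
`Q_n ∈ 𝒫_W` with `Q_n(A) > n δ_n` and `∫ X dQ_n < δ_n` for all `X ∈ 𝒞̃_n`. -/
theorem sNABR_FTAP {Ω : Type*} [MeasurableSpace Ω]
    (Ps : Set (Measure Ω)) (hPsne : Ps.Nonempty)
    (hPsprob : ∀ P ∈ Ps, IsProbabilityMeasure P)
    (W : Ω → ℝ) (hWmeas : Measurable W) (hW1 : ∀ ω, 1 ≤ W ω)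
    (Kc : Set (Ω → ℝ)) (hKc : IsConvexCone Kc)
    (hFatou : FatouClosed Ps W (coneC Ps W Kc)) :
    (∀ X : Ω → ℝ, BddMeas X → LeQS Ps (fun _ => 0) X → X ∈ coneCHat Ps W Kc →
        EqQS Ps X (fun _ => 0)) ↔
      (∀ A : Set Ω, MeasurableSet A → ¬ Polar Ps A →
        ∀ n : ℕ, 1 ≤ n →
          ∃ δ : ℝ, 0 < δ ∧ δ ≤ 1 / (n : ℝ) ∧ ∃ Q ∈ PW Ps W,
            ENNReal.ofReal ((n : ℝ) * δ) < Q A ∧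
            ∀ X ∈ coneCTildeLam Ps W Kc (n : ℝ), ∫ ω, X ω ∂Q < δ) := by
  constructor
  · intro h A hA hAp n hn
    exact aux_forward Ps hPsprob W hWmeas hW1 Kc hKc hFatou h A hA hAp n hn
  · intro h X hX hX0 hXC
    exact aux_back Ps W Kc h hW1 X hX hX0 hXC

end Paper
end
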